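/- arXiv:1509.08502 — 5 statements merged into one kernel-verified Lean document; each statement's English description precedes it below -/
import Mathlib

section
/- In any implication zroupoid satisfying x'' = x, the identity (0 → x') → (y → x) = y → x holds. -/
/-!
Write `x′` for `x ⇒ 0`. Expanding `y ⇒ x = (0′ ⇒ y) ⇒ x` by (I) shows that `x′ ⇒ 0′`, which equals
`0 ⇒ x`, acts as a left identity on `(y ⇒ x)′`. In particular `x′ = (0 ⇒ x) ⇒ x′`; since
`0 ⇒ 0 ⇒ x = 0 ⇒ x`, expanding `(0 ⇒ 0 ⇒ x) ⇒ x′` gives `x′ = (x′ ⇒ x)′`, that is `x′ ⇒ x = x`,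
and then (I) yields `(x ⇒ y) ⇒ x = (0 ⇒ y) ⇒ x`. For `b = y ⇒ x`, one more expansion gives
`(0 ⇒ x′) ⇒ b = (x ⇒ 0′) ⇒ b = ((b′ ⇒ x) ⇒ b′)′ = ((0 ⇒ x) ⇒ b′)′ = b′′ = b`.
-/

/-- Implication zroupoids: a common generalization of De Morgan algebras and of
`∨`-semilattices with zero, given by an implication and a constant. The complement `x → 0` is
notation (`x′`) rather than a field; the field `imp_imp` is identity (I). -/
class ImplicationZroupoid (A : Type*) extends Zero A where
  imp : A → A → A
  imp_imp (x y w : A) :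
    imp (imp x y) w = imp (imp (imp (imp w 0) x) (imp (imp y w) 0)) 0
  compl_compl_zero : imp (imp 0 0) 0 = (0 : A)

/-- Implication zroupoids whose complement is an involution, the variety **I**₂,₀ in the
literature. -/
class InvolutiveImplicationZroupoid (A : Type*) extends ImplicationZroupoid A where
  compl_compl (x : A) : imp (imp x 0) 0 = x

namespace InvolutiveImplicationZroupoid

open ImplicationZroupoid

local infixr:60 " ⇒ " => ImplicationZroupoid.imp

local notation:max x:max "′" => ImplicationZroupoid.imp x 0

variable {A : Type*} [InvolutiveImplicationZroupoid A]

theorem compl_zero_imp (x : A) : 0′ ⇒ x = x :=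
  calc 0′ ⇒ x = (0′ ⇒ x)′′ := (compl_compl _).symm
    _ = ((0′ ⇒ x) ⇒ 0′′)′ := by rw [compl_compl_zero]
    _ = x′′ := (imp_imp x 0 0).symm
    _ = x := compl_compl x

theorem zero_imp_imp (x y : A) : (0 ⇒ x) ⇒ y = (y ⇒ (x ⇒ y)′)′ := by
  rw [imp_imp, compl_compl]

theorem imp_compl_zero_imp (x : A) : x ⇒ (0 ⇒ x)′ = x′ :=
  calc x ⇒ (0 ⇒ x)′ = (x ⇒ (0 ⇒ x)′)′′ := (compl_compl _).symm
    _ = (0′ ⇒ x)′ := by rw [← zero_imp_imp 0 x]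
    _ = x′ := by rw [compl_zero_imp]

theorem zero_imp_compl_zero : (0 : A) ⇒ 0′ = 0′ :=
  calc (0 : A) ⇒ 0′ = (0 ⇒ 0′)′′ := (compl_compl _).symm
    _ = (0′ ⇒ (0 ⇒ 0′)′)′ := by rw [compl_zero_imp]
    _ = 0′′′ := by rw [imp_compl_zero_imp]
    _ = 0′ := compl_compl _

theorem compl_imp_compl_zero (x : A) : x′ ⇒ 0′ = 0 ⇒ x :=
  calc x′ ⇒ 0′ = ((0′′ ⇒ x) ⇒ (0 ⇒ 0′)′)′ := imp_imp x 0 0′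
    _ = (0 ⇒ x)′′ := by rw [zero_imp_compl_zero, compl_compl]
    _ = 0 ⇒ x := compl_compl _

theorem zero_imp_compl (x : A) : 0 ⇒ x′ = x ⇒ 0′ := by
  rw [← compl_imp_compl_zero, compl_compl]

theorem zero_imp_imp_compl_imp (x y : A) : (0 ⇒ x) ⇒ (y ⇒ x)′ = (y ⇒ x)′ :=
  calc (0 ⇒ x) ⇒ (y ⇒ x)′ = (x′ ⇒ 0′) ⇒ (y ⇒ x)′ := by rw [compl_imp_compl_zero]
    _ = ((x′ ⇒ 0′) ⇒ (y ⇒ x)′)′′ := (compl_compl _).symm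
    _ = ((0′ ⇒ y) ⇒ x)′ := by rw [← imp_imp 0′ y x]
    _ = (y ⇒ x)′ := by rw [compl_zero_imp]

theorem zero_imp_imp_compl_self (x : A) : (0 ⇒ x) ⇒ x′ = x′ := by
  simpa only [compl_zero_imp] using zero_imp_imp_compl_imp x 0′

theorem zero_imp_imp_compl_zero (x : A) : (0 ⇒ x) ⇒ 0′ = 0 ⇒ x′ :=
  calc (0 ⇒ x) ⇒ 0′ = (0′ ⇒ (x ⇒ 0′)′)′ := zero_imp_imp x 0′
    _ = (x ⇒ 0′)′′ := by rw [compl_zero_imp]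
    _ = 0 ⇒ x′ := by rw [compl_compl, zero_imp_compl]

theorem zero_imp_zero_imp (x : A) : 0 ⇒ 0 ⇒ x = 0 ⇒ x :=
  calc 0 ⇒ 0 ⇒ x = 0 ⇒ (0 ⇒ x)′′ := by rw [compl_compl]
    _ = (0 ⇒ (0 ⇒ x)′) ⇒ 0′ := (zero_imp_imp_compl_zero _).symm
    _ = (0 ⇒ x′) ⇒ 0′ := by rw [zero_imp_compl (0 ⇒ x), zero_imp_imp_compl_zero]
    _ = 0 ⇒ x := by rw [zero_imp_imp_compl_zero, compl_compl]

theorem compl_imp_self (x : A) : x′ ⇒ x = x := by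
  have compl_eq : x′ = (x′ ⇒ x)′ :=
    calc x′ = (0 ⇒ 0 ⇒ x) ⇒ x′ := by rw [zero_imp_zero_imp, zero_imp_imp_compl_self]
      _ = (x′ ⇒ ((0 ⇒ x) ⇒ x′)′)′ := zero_imp_imp _ _
      _ = (x′ ⇒ x)′ := by rw [zero_imp_imp_compl_self, compl_compl]
  rw [← compl_compl (x′ ⇒ x), ← compl_eq, compl_compl]

theorem imp_imp_self (x y : A) : (x ⇒ y) ⇒ x = (0 ⇒ y) ⇒ x :=
  calc (x ⇒ y) ⇒ x = ((x′ ⇒ x) ⇒ (y ⇒ x)′)′ := imp_imp x y x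
    _ = (x ⇒ (y ⇒ x)′)′ := by rw [compl_imp_self]
    _ = (0 ⇒ y) ⇒ x := (zero_imp_imp y x).symm

theorem zero_imp_compl_imp_imp (x y : A) : (0 ⇒ x′) ⇒ y ⇒ x = y ⇒ x :=
  calc (0 ⇒ x′) ⇒ y ⇒ x = (x ⇒ 0′) ⇒ y ⇒ x := by rw [zero_imp_compl]
    _ = (((y ⇒ x)′ ⇒ x) ⇒ (0′ ⇒ y ⇒ x)′)′ := imp_imp _ _ _
    _ = (((y ⇒ x)′ ⇒ x) ⇒ (y ⇒ x)′)′ := by rw [compl_zero_imp (y ⇒ x)]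
    _ = ((0 ⇒ x) ⇒ (y ⇒ x)′)′ := by rw [imp_imp_self]
    _ = (y ⇒ x)′′ := by rw [zero_imp_imp_compl_imp]
    _ = y ⇒ x := compl_compl _

end InvolutiveImplicationZroupoid

theorem stmt1 (A : Type*) (imp : A → A → A) (z : A)
    (hI : ∀ x y w : A, imp (imp x y) w = imp (imp (imp (imp w z) x) (imp (imp y w) z)) z)
    (hI0 : imp (imp z z) z = z)
    (hInv : ∀ x : A, imp (imp x z) z = x) :
    ∀ x y : A, imp (imp z (imp x z)) (imp y x) = imp y x := by
  let _ : InvolutiveImplicationZroupoid A :=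
    { zero := z
      imp := imp
      imp_imp := hI
      compl_compl_zero := hI0
      compl_compl := hInv }
  exact InvolutiveImplicationZroupoid.zero_imp_compl_imp_imp
end

section
/- In any implication zroupoid satisfying x'' = x, the identity ((x → y) → (y → z))' = (0 → x) → (y → z)' holds. -/
/-!
Write `∼x` for `x ⇨ 0`. Since `∼∼x = x`, axiom (I) computes complements:
`∼((x ⇨ y) ⇨ w) = (∼w ⇨ x) ⇨ ∼(y ⇨ w)`. So `∼((x ⇨ y) ⇨ (y ⇨ w))` equals
`(∼(y ⇨ w) ⇨ x) ⇨ ∼(y ⇨ (y ⇨ w))`, which simplifies as desired by the contraction law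
`y ⇨ (y ⇨ w) = y ⇨ w` and the law `(x ⇨ y) ⇨ x = (0 ⇨ y) ⇨ x`. The second law is immediate by taking
complements. For the contraction law, put `u = x ⇨ y`: for every `v` one has
`x ⇨ v = ∼v ⇨ ∼(∼x ⇨ ∼(0 ⇨ v))`, and for `v = u` the inner `0 ⇨ u` may be replaced by `u`, whence
`x ⇨ u = ∼u ⇨ ∼(∼x ⇨ ∼u) = ∼((0 ⇨ ∼x) ⇨ ∼u) = u`.
-/

local notation:max "∼" x:max => x ⇨ 0

/-- An implication zroupoid satisfying `x'' = x`, where `x → y` is written `x ⇨ y` and `x' = x → 0`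
is written `∼x`. The axiom `0'' = 0` is the instance `x = 0` of `compl_compl`. -/
class InvolutiveImplicationZroupoid_s11 (A : Type*) extends HImp A, Zero A where
  himp_himp_eq (x y w : A) : (x ⇨ y) ⇨ w = ∼((∼w ⇨ x) ⇨ ∼(y ⇨ w))
  compl_compl (x : A) : ∼∼x = x

namespace InvolutiveImplicationZroupoid_s11

variable {A : Type*} [InvolutiveImplicationZroupoid_s11 A]

theorem eq_of_compl_eq_compl {x y : A} (h : ∼x = ∼y) : x = y := by
  rw [← compl_compl x, h, compl_compl]

theorem compl_himp_himp (x y w : A) : ∼((x ⇨ y) ⇨ w) = (∼w ⇨ x) ⇨ ∼(y ⇨ w) := by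
  rw [himp_himp_eq x y w, compl_compl]

theorem compl_compl_himp (x w : A) : ∼(∼x ⇨ w) = (∼w ⇨ x) ⇨ ∼(0 ⇨ w) :=
  compl_himp_himp x 0 w

theorem compl_himp (x y : A) : ∼(x ⇨ y) = (∼y ⇨ ∼x) ⇨ ∼(0 ⇨ y) := by
  rw [← compl_compl_himp, compl_compl]

theorem compl_zero_himp (x : A) : ∼(0 : A) ⇨ x = x := by
  have h : ∼∼x = ∼((∼0 ⇨ x) ⇨ ∼∼0) := himp_himp_eq x 0 0
  rw [compl_compl, compl_compl, compl_compl] at h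
  exact h.symm

theorem zero_himp_compl_zero : (0 : A) ⇨ ∼0 = ∼0 := by
  have h : ∼((∼0 ⇨ ∼0) ⇨ ∼0) = (∼∼(0 : A) ⇨ ∼0) ⇨ ∼(∼0 ⇨ ∼0) := compl_himp_himp ∼0 ∼0 ∼0
  simp only [compl_zero_himp, compl_compl] at h
  rw [← compl_compl (0 ⇨ ∼0), ← h]

theorem compl_himp_self (x : A) : ∼x ⇨ x = x := by
  have h : ∼((0 ⇨ ∼0) ⇨ ∼x) = ∼∼∼x ⇨ ∼(∼0 ⇨ ∼x) := compl_himp_himp 0 ∼0 ∼x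
  simp only [zero_himp_compl_zero, compl_zero_himp, compl_compl] at h
  exact h.symm

theorem himp_compl_self (x : A) : x ⇨ ∼x = ∼x := by
  simpa only [compl_compl] using compl_himp_self ∼x

theorem compl_zero_himp_himp (x y : A) : ∼((0 ⇨ x) ⇨ y) = y ⇨ ∼(x ⇨ y) := by
  rw [compl_himp_himp, compl_compl]

theorem himp_himp_self_eq_zero_himp_himp (x y : A) : (x ⇨ y) ⇨ x = (0 ⇨ y) ⇨ x := by
  apply eq_of_compl_eq_compl
  rw [compl_himp_himp, compl_himp_self, compl_zero_himp_himp]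

theorem zero_himp_himp_compl_self (x : A) : (0 ⇨ x) ⇨ ∼x = ∼x := by
  rw [← himp_himp_self_eq_zero_himp_himp, compl_himp_self, himp_compl_self]

theorem himp_compl_zero (x : A) : x ⇨ ∼0 = 0 ⇨ ∼x := by
  apply eq_of_compl_eq_compl
  have h : ∼(∼∼x ⇨ ∼0) = (∼∼0 ⇨ ∼x) ⇨ ∼(0 ⇨ ∼0) := compl_compl_himp ∼x ∼0
  rwa [zero_himp_compl_zero, compl_compl, compl_compl] at h

theorem zero_himp_compl_zero_himp (x : A) : 0 ⇨ ∼(0 ⇨ x) = 0 ⇨ ∼x := by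
  rw [← himp_compl_zero, ← himp_himp_self_eq_zero_himp_himp, compl_zero_himp, himp_compl_zero]

theorem zero_himp_zero_himp (x : A) : 0 ⇨ (0 ⇨ x) = 0 ⇨ x := by
  calc 0 ⇨ (0 ⇨ x) = 0 ⇨ ∼∼(0 ⇨ x) := by rw [compl_compl]
    _ = 0 ⇨ ∼(0 ⇨ ∼(0 ⇨ x)) := (zero_himp_compl_zero_himp _).symm
    _ = 0 ⇨ ∼(0 ⇨ ∼x) := by rw [zero_himp_compl_zero_himp x]
    _ = 0 ⇨ ∼∼x := zero_himp_compl_zero_himp _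
    _ = 0 ⇨ x := by rw [compl_compl]

theorem zero_himp_himp_himp_self (x y : A) : (0 ⇨ (x ⇨ y)) ⇨ x = (x ⇨ y) ⇨ x := by
  apply eq_of_compl_eq_compl
  calc ∼((0 ⇨ (x ⇨ y)) ⇨ x) = x ⇨ ∼((x ⇨ y) ⇨ x) := compl_zero_himp_himp _ _
    _ = x ⇨ ∼((0 ⇨ y) ⇨ x) := by rw [himp_himp_self_eq_zero_himp_himp]
    _ = ∼((0 ⇨ (0 ⇨ y)) ⇨ x) := (compl_zero_himp_himp _ _).symm
    _ = ∼((x ⇨ y) ⇨ x) := by rw [zero_himp_zero_himp, himp_himp_self_eq_zero_himp_himp]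

theorem himp_eq_compl_himp_compl (x v : A) : x ⇨ v = ∼v ⇨ ∼(∼x ⇨ ∼(0 ⇨ v)) := by
  calc x ⇨ v = ∼∼(x ⇨ v) := (compl_compl _).symm
    _ = ∼((∼v ⇨ ∼x) ⇨ ∼(0 ⇨ v)) := by rw [compl_himp x v]
    _ = ((0 ⇨ v) ⇨ ∼v) ⇨ ∼(∼x ⇨ ∼(0 ⇨ v)) := by rw [compl_himp_himp, compl_compl]
    _ = ∼v ⇨ ∼(∼x ⇨ ∼(0 ⇨ v)) := by rw [zero_himp_himp_compl_self]

theorem compl_himp_compl_zero_himp_himp (x y : A) :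
    ∼x ⇨ ∼(0 ⇨ (x ⇨ y)) = ∼x ⇨ ∼(x ⇨ y) := by
  apply eq_of_compl_eq_compl
  rw [compl_compl_himp, compl_compl_himp, compl_compl, compl_compl, zero_himp_himp_himp_self,
    zero_himp_compl_zero_himp]

theorem contrapositive_himp_compl_himp (x y : A) : (∼y ⇨ ∼x) ⇨ ∼(x ⇨ y) = ∼(x ⇨ y) := by
  rw [← compl_himp_himp, compl_himp_self]

theorem himp_himp_compl_contrapositive (x y : A) : (x ⇨ y) ⇨ ∼(∼y ⇨ ∼x) = ∼(∼y ⇨ ∼x) := by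
  simpa only [compl_compl] using contrapositive_himp_compl_himp ∼y ∼x

theorem zero_himp_compl_himp_compl_himp (x y : A) : (0 ⇨ ∼x) ⇨ ∼(x ⇨ y) = ∼(x ⇨ y) := by
  apply eq_of_compl_eq_compl
  calc ∼((0 ⇨ ∼x) ⇨ ∼(x ⇨ y))
      = ((x ⇨ y) ⇨ ∼(0 ⇨ ∼x)) ⇨ ∼(0 ⇨ ∼(x ⇨ y)) := by rw [compl_himp, compl_compl]
    _ = ∼(∼y ⇨ ∼x) ⇨ ∼(0 ⇨ ∼(x ⇨ y)) := by rw [compl_compl_himp y, compl_compl]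
    _ = ((x ⇨ y) ⇨ ∼(∼y ⇨ ∼x)) ⇨ ∼(0 ⇨ ∼(x ⇨ y)) := by rw [himp_himp_compl_contrapositive]
    _ = ∼((∼y ⇨ ∼x) ⇨ ∼(x ⇨ y)) := by rw [compl_himp (∼y ⇨ ∼x), compl_compl]
    _ = ∼∼(x ⇨ y) := by rw [contrapositive_himp_compl_himp]

theorem himp_idem (x y : A) : x ⇨ (x ⇨ y) = x ⇨ y := by
  calc x ⇨ (x ⇨ y) = ∼(x ⇨ y) ⇨ ∼(∼x ⇨ ∼(0 ⇨ (x ⇨ y))) := himp_eq_compl_himp_compl _ _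
    _ = ∼(x ⇨ y) ⇨ ∼(∼x ⇨ ∼(x ⇨ y)) := by rw [compl_himp_compl_zero_himp_himp]
    _ = ∼((0 ⇨ ∼x) ⇨ ∼(x ⇨ y)) := (compl_zero_himp_himp _ _).symm
    _ = ∼∼(x ⇨ y) := by rw [zero_himp_compl_himp_compl_himp]
    _ = x ⇨ y := compl_compl _

theorem compl_himp_himp_himp (x y w : A) : ∼((x ⇨ y) ⇨ (y ⇨ w)) = (0 ⇨ x) ⇨ ∼(y ⇨ w) := by
  calc ∼((x ⇨ y) ⇨ (y ⇨ w)) = (∼(y ⇨ w) ⇨ x) ⇨ ∼(y ⇨ (y ⇨ w)) := compl_himp_himp _ _ _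
    _ = (∼(y ⇨ w) ⇨ x) ⇨ ∼(y ⇨ w) := by rw [himp_idem]
    _ = (0 ⇨ x) ⇨ ∼(y ⇨ w) := himp_himp_self_eq_zero_himp_himp _ _

end InvolutiveImplicationZroupoid_s11

theorem stmt11 (A : Type*) (imp : A → A → A) (z : A)
    (hI : ∀ x y w : A, imp (imp x y) w = imp (imp (imp (imp w z) x) (imp (imp y w) z)) z)
    (hI0 : imp (imp z z) z = z)
    (hInv : ∀ x : A, imp (imp x z) z = x) :
    ∀ x y w : A, imp (imp (imp x y) (imp y w)) z = imp (imp z x) (imp (imp y w) z) := by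
  let _ : InvolutiveImplicationZroupoid_s11 A :=
    { himp := imp, zero := z, himp_himp_eq := hI, compl_compl := hInv }
  exact InvolutiveImplicationZroupoid_s11.compl_himp_himp_himp
end

section
/- In any implication zroupoid satisfying x'' = x, the relation R₁ defined by x R₁ y iff (x → y') → x = x and (y → x') → y = y is an equivalence relation. -/
/-!
Put `x ⊔ y = x' → y`, `x ⊓ y = (x → y')'`, `⊥ = 0` and `⊤ = 0'`. When `x'' = x`, axiom (I) is the
twisted distributive law `x ⊓ y ⊔ w = (w ⊔ x) ⊓ (y ⊔ w)`, and the first half of `x R₁ y` says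
`x ⊓ y ⊔ x = x`. The twisted laws give `x ⊓ y ⊔ x = (⊤ ⊔ y) ⊓ x`. So if `a` is related to `b` and
`b` to `c`, then `a ⊓ c ⊔ a = a ⊓ c ⊔ (⊤ ⊔ b) ⊓ a = (c ⊔ (⊤ ⊔ b)) ⊓ a`, and `c` is absorbed by
`⊤ ⊔ b` because `b = (⊤ ⊔ c) ⊓ b` and `⊤ ⊔ ·` preserves `⊓`.
-/

/-- A twisted distributive bimagma: two binary operations with right identities that distribute over
each other up to a swap of the operands in the first factor. It isolates what is needed of the
operations derived from an involutive implication zroupoid; every bounded distributive lattice is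
also an example. The lattice symbols are only notation: neither operation is assumed commutative or
associative, and no order is involved. -/
class TwistedDistribBimagma (A : Type*) extends Max A, Min A, Bot A, Top A where
  sup_bot (x : A) : x ⊔ ⊥ = x
  inf_top (x : A) : x ⊓ ⊤ = x
  inf_sup (x y w : A) : x ⊓ y ⊔ w = (w ⊔ x) ⊓ (y ⊔ w)
  sup_inf (x y w : A) : (x ⊔ y) ⊓ w = w ⊓ x ⊔ y ⊓ w

namespace TwistedDistribBimagma

section

variable {A : Type*} [TwistedDistribBimagma A]

instance : TwistedDistribBimagma Aᵒᵈ where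
  sup_bot := inf_top (A := A)
  inf_top := sup_bot (A := A)
  inf_sup := sup_inf (A := A)
  sup_inf := inf_sup (A := A)

theorem bot_sup (x : A) : ⊥ ⊔ x = x :=
  calc
    ⊥ ⊔ x = (⊥ ⊔ x) ⊓ (⊤ ⊔ ⊥) := by rw [sup_bot ⊤, inf_top]
    _ = x ⊓ ⊤ ⊔ ⊥ := (inf_sup x ⊤ ⊥).symm
    _ = x := by rw [sup_bot, inf_top]

theorem top_inf (x : A) : ⊤ ⊓ x = x :=
  bot_sup (A := Aᵒᵈ) x

theorem bot_inf_bot : (⊥ : A) ⊓ ⊥ = ⊥ :=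
  calc
    (⊥ : A) ⊓ ⊥ = ⊥ ⊓ ⊥ ⊔ ⊤ ⊓ ⊥ := by rw [top_inf, sup_bot]
    _ = (⊥ ⊔ ⊤) ⊓ ⊥ := (sup_inf ⊥ ⊤ ⊥).symm
    _ = ⊥ := by rw [bot_sup, top_inf]

theorem inf_self (x : A) : x ⊓ x = x :=
  calc
    x ⊓ x = (x ⊔ ⊥) ⊓ (⊥ ⊔ x) := by rw [sup_bot, bot_sup]
    _ = ⊥ ⊓ ⊥ ⊔ x := (inf_sup ⊥ ⊥ x).symm
    _ = x := by rw [bot_inf_bot, bot_sup]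

theorem sup_self (x : A) : x ⊔ x = x :=
  inf_self (A := Aᵒᵈ) x

theorem inf_bot_comm (x : A) : x ⊓ ⊥ = ⊥ ⊓ x :=
  calc
    x ⊓ ⊥ = (x ⊔ ⊥) ⊓ ⊥ := by rw [sup_bot]
    _ = ⊥ ⊓ x ⊔ ⊥ ⊓ ⊥ := sup_inf x ⊥ ⊥
    _ = ⊥ ⊓ x := by rw [bot_inf_bot, sup_bot]

theorem sup_top_comm (x : A) : x ⊔ ⊤ = ⊤ ⊔ x :=
  inf_bot_comm (A := Aᵒᵈ) x

theorem top_sup_inf (x y : A) : ⊤ ⊔ x ⊓ y = (⊤ ⊔ x) ⊓ (⊤ ⊔ y) := by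
  rw [← sup_top_comm, inf_sup, sup_top_comm y]

theorem top_sup_bot_inf (x : A) : ⊤ ⊔ ⊥ ⊓ x = ⊤ ⊔ x := by
  rw [top_sup_inf, sup_bot, top_inf]

theorem bot_inf_top_sup (x : A) : ⊥ ⊓ (⊤ ⊔ x) = ⊥ ⊓ x :=
  top_sup_bot_inf (A := Aᵒᵈ) x

theorem top_sup_top_sup (x : A) : ⊤ ⊔ (⊤ ⊔ x) = ⊤ ⊔ x := by
  rw [← top_sup_bot_inf (⊤ ⊔ x), bot_inf_top_sup, top_sup_bot_inf]

theorem inf_sup_self_eq_bot_inf_sup (x y : A) : x ⊓ y ⊔ x = ⊥ ⊓ y ⊔ x := by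
  rw [inf_sup, inf_sup, sup_self, sup_bot]

theorem bot_inf_sup (x y : A) : ⊥ ⊓ x ⊔ y = (⊤ ⊔ x) ⊓ y :=
  calc
    ⊥ ⊓ x ⊔ y = (y ⊔ x) ⊓ y := by rw [← inf_bot_comm, inf_sup, bot_sup]
    _ = y ⊔ x ⊓ y := by rw [sup_inf, inf_self]
    _ = (⊤ ⊔ x) ⊓ y := by rw [sup_inf, inf_top]

theorem inf_sup_self_eq_top_sup_inf (x y : A) : x ⊓ y ⊔ x = (⊤ ⊔ y) ⊓ x := by
  rw [inf_sup_self_eq_bot_inf_sup, bot_inf_sup]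

theorem sup_top_sup (x y : A) : x ⊔ (⊤ ⊔ y) = (⊤ ⊔ x) ⊓ (⊤ ⊔ y) :=
  calc
    x ⊔ (⊤ ⊔ y) = x ⊓ ⊤ ⊔ (⊤ ⊔ y) := by rw [inf_top]
    _ = (⊤ ⊔ y ⊔ x) ⊓ (⊤ ⊔ y) := by rw [inf_sup, top_sup_top_sup]
    _ = x ⊓ ⊥ ⊔ (⊤ ⊔ y) := by rw [inf_sup, bot_sup]
    _ = (⊤ ⊔ x) ⊓ (⊤ ⊔ y) := by rw [inf_bot_comm, bot_inf_sup]

theorem inf_sup_self_refl (a : A) : a ⊓ a ⊔ a = a := by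
  rw [inf_self, sup_self]

theorem inf_sup_self_trans {a b c : A} (hab : a ⊓ b ⊔ a = a) (hbc : b ⊓ c ⊔ b = b) :
    a ⊓ c ⊔ a = a := by
  rw [inf_sup_self_eq_top_sup_inf] at hab hbc
  have absorb : c ⊔ (⊤ ⊔ b) = ⊤ ⊔ b :=
    calc
      c ⊔ (⊤ ⊔ b) = (⊤ ⊔ (⊤ ⊔ c)) ⊓ (⊤ ⊔ b) := by rw [sup_top_sup, top_sup_top_sup]
      _ = ⊤ ⊔ b := by rw [← top_sup_inf, hbc]
  calc
    a ⊓ c ⊔ a = a ⊓ c ⊔ (⊤ ⊔ b) ⊓ a := by rw [hab]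
    _ = (c ⊔ (⊤ ⊔ b)) ⊓ a := (sup_inf c (⊤ ⊔ b) a).symm
    _ = a := by rw [absorb, hab]

end

/-- The twisted distributive bimagma derived from an involutive implication zroupoid with
implication `imp` and constant `z`, in which the first half of `R₁` reads `x ⊓ y ⊔ x = x`. -/
abbrev ofImp {A : Type*} (imp : A → A → A) (z : A)
    (hI : ∀ x y w : A, imp (imp x y) w = imp (imp (imp (imp w z) x) (imp (imp y w) z)) z)
    (hInv : ∀ x : A, imp (imp x z) z = x) : TwistedDistribBimagma A where
  max x y := imp (imp x z) y
  min x y := imp (imp x (imp y z)) z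
  bot := z
  top := imp z z
  sup_bot := hInv
  inf_top x := by rw [hInv, hInv]
  inf_sup x y w := by rw [hInv, hI]
  sup_inf x y w := by rw [hI (imp x z) y, hInv, hInv, hInv]

end TwistedDistribBimagma

theorem stmt13_general (A : Type*) [TwistedDistribBimagma A] :
    Equivalence (fun x y : A => x ⊓ y ⊔ x = x ∧ y ⊓ x ⊔ y = y) where
  refl x := ⟨TwistedDistribBimagma.inf_sup_self_refl x, TwistedDistribBimagma.inf_sup_self_refl x⟩
  symm := And.symm
  trans hxy hyw := ⟨TwistedDistribBimagma.inf_sup_self_trans hxy.1 hyw.1,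
    TwistedDistribBimagma.inf_sup_self_trans hyw.2 hxy.2⟩

theorem stmt13 (A : Type*) (imp : A → A → A) (z : A)
    (hI : ∀ x y w : A, imp (imp x y) w = imp (imp (imp (imp w z) x) (imp (imp y w) z)) z)
    (hI0 : imp (imp z z) z = z)
    (hInv : ∀ x : A, imp (imp x z) z = x) :
    Equivalence (fun x y : A => imp (imp x (imp y z)) x = x ∧ imp (imp y (imp x z)) y = y) := by
  let _ := TwistedDistribBimagma.ofImp imp z hI hInv
  have inf_sup_self_eq (x y : A) : x ⊓ y ⊔ x = imp (imp x (imp y z)) x :=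
    congrArg (imp · x) (hInv (imp x (imp y z)))
  simpa only [inf_sup_self_eq] using stmt13_general A
end

section
/- In any implication zroupoid satisfying x'' = x, the relation R₁ defined by x R₁ y iff (x → y') → x = x and (y → x') → y = y is a congruence, i.e., it is an equivalence relation compatible with the operation →: if a R₁ b and c R₁ d then (a → c) R₁ (b → d). -/
/-
Write `x ∨ y = x' → y` and `x ∧ y = (x → y')'`. Axiom (I) then becomes the twisted distributive law
`(x ∧ y) ∨ w = (w ∨ x) ∧ (y ∨ w)`, and complementation gives every identity a dual. The map
`x ↦ 0 ∧ x` preserves `∨` and retracts the algebra onto a subset on which `∨` and `∧` coincide.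
There the law reads `(xy)w = (wx)(yw)`, which together with the unit `0` yields a right regular
band. The term `(y ∧ x) ∨ y`, whose deviation from `y` measures the failure of absorption, equals
`(0 ∧ x) ∨ y`; consequently `R₁` is the inverse image of Green's relation `𝓡` of that band, and
`𝓡` is a congruence on every right regular band.
-/

section TwistedMagma

variable {S : Type*} [MulOneClass S]

theorem mul_self_of_twisted (h : ∀ x y w : S, x * y * w = w * x * (y * w)) (x : S) :
    x * x = x := by
  simpa only [mul_one, one_mul] using (h 1 1 x).symm

theorem mul_mul_self_left_of_twisted (h : ∀ x y w : S, x * y * w = w * x * (y * w)) (x y : S) :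
    y * (x * y) = x * y := by
  simpa only [mul_one, one_mul] using (h 1 x y).symm

theorem mul_mul_self_right_of_twisted (h : ∀ x y w : S, x * y * w = w * x * (y * w)) (x y : S) :
    x * y * y = x * y := by
  have hyxy : x * y = y * x * y := by simpa only [mul_one, one_mul] using h x 1 y
  rw [h x y y, mul_self_of_twisted h, ← hyxy]

theorem mul_assoc_of_twisted (h : ∀ x y w : S, x * y * w = w * x * (y * w)) (x y w : S) :
    x * y * w = x * (y * w) :=
  calc x * y * w = w * x * (y * w) := h x y w
    _ = y * w * w * (x * (y * w)) := h w x (y * w)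
    _ = y * w * (x * (y * w)) := by rw [mul_mul_self_right_of_twisted h]
    _ = x * (y * w) := mul_mul_self_left_of_twisted h x (y * w)

end TwistedMagma

/-- Green's relation `𝓡` on a band: for idempotents, `sS = tS` means that each of `s`, `t` is a left
unit for the other. -/
def GreenR {S : Type*} [Mul S] (s t : S) : Prop :=
  t * s = s ∧ s * t = t

section GreenR

variable {S : Type*} [Semigroup S]

theorem mul_eq_right_trans {s t u : S} (hst : s * t = t) (htu : t * u = u) : s * u = u := by
  rw [← htu, ← mul_assoc, hst]

theorem greenR_equivalence (hidem : ∀ s : S, s * s = s) : Equivalence (GreenR (S := S)) where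
  refl s := ⟨hidem s, hidem s⟩
  symm h := h.symm
  trans h k := ⟨mul_eq_right_trans k.1 h.1, mul_eq_right_trans h.2 k.2⟩

theorem mul_mul_mul_eq_right (hreg : ∀ s t : S, t * (s * t) = s * t) {s t u v : S}
    (hst : s * t = t) (huv : u * v = v) : s * u * (t * v) = t * v := by
  have hutv : u * (t * v) = t * v :=
    calc u * (t * v) = u * (t * u) * v := by rw [mul_assoc, mul_assoc, huv]
      _ = t * v := by rw [hreg, mul_assoc, huv]
  rw [mul_assoc, hutv, ← mul_assoc, hst]

theorem GreenR.mul (hreg : ∀ s t : S, t * (s * t) = s * t) {s t u v : S}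
    (hst : GreenR s t) (huv : GreenR u v) : GreenR (s * u) (t * v) :=
  ⟨mul_mul_mul_eq_right hreg hst.1 huv.1, mul_mul_mul_eq_right hreg hst.2 huv.2⟩

end GreenR

/-- Implication zroupoids with `x'' = x`, where `x ⇨ y` stands for `x → y`, `⊥` for `0` and
`x ⇨ ⊥` for `x'`. The axiom `0'' = 0` is the case `x = 0` of the involution law. -/
class InvolutiveZroupoid (A : Type*) extends HImp A, Bot A where
  himp_himp (x y w : A) : (x ⇨ y) ⇨ w = (((w ⇨ ⊥) ⇨ x) ⇨ ((y ⇨ w) ⇨ ⊥)) ⇨ ⊥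
  himp_bot_himp_bot (x : A) : (x ⇨ ⊥) ⇨ ⊥ = x

namespace InvolutiveZroupoid

variable {A : Type*} [InvolutiveZroupoid A]

/-- The involution `x' = x → 0`. -/
scoped instance : Compl A := ⟨fun x => x ⇨ ⊥⟩

/-- The element `1 = 0'`. -/
scoped instance : Top A := ⟨⊥ᶜ⟩

/-- The join `x ∨ y = x' → y`, not commutative in general. -/
scoped instance : Max A := ⟨fun x y => xᶜ ⇨ y⟩

/-- The meet `x ∧ y = (x → y')'`, the De Morgan dual of the join. -/
scoped instance : Min A := ⟨fun x y => (x ⇨ yᶜ)ᶜ⟩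

theorem compl_compl (x : A) : xᶜᶜ = x :=
  himp_bot_himp_bot x

theorem himp_eq_compl_sup (x y : A) : x ⇨ y = xᶜ ⊔ y :=
  congrArg (· ⇨ y) (compl_compl x).symm

theorem compl_inf (x y : A) : (x ⊓ y)ᶜ = xᶜ ⊔ yᶜ :=
  (compl_compl _).trans (himp_eq_compl_sup x yᶜ)

theorem compl_sup (x y : A) : (x ⊔ y)ᶜ = xᶜ ⊓ yᶜ := by
  rw [← compl_compl (xᶜ ⊓ yᶜ), compl_inf, compl_compl, compl_compl]

theorem compl_bot : (⊥ : A)ᶜ = ⊤ := rfl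

theorem compl_top : (⊤ : A)ᶜ = ⊥ := compl_compl ⊥

theorem sup_bot (x : A) : x ⊔ ⊥ = x :=
  compl_compl x

theorem inf_top (x : A) : x ⊓ ⊤ = x := by
  rw [← compl_compl (x ⊓ ⊤), compl_inf, compl_top, sup_bot, compl_compl]

theorem inf_sup (x y w : A) : (x ⊓ y) ⊔ w = (w ⊔ x) ⊓ (y ⊔ w) := by
  have h : (x ⇨ yᶜ) ⇨ w = (w ⊔ x) ⊓ (yᶜ ⇨ w) := himp_himp x yᶜ w
  rwa [himp_eq_compl_sup x, himp_eq_compl_sup _ w, himp_eq_compl_sup _ w, compl_compl,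
    compl_sup, compl_compl, compl_compl] at h

theorem sup_inf (x y w : A) : (x ⊔ y) ⊓ w = (w ⊓ x) ⊔ (y ⊓ w) := by
  simpa only [compl_sup, compl_inf, compl_compl] using congrArg compl (inf_sup xᶜ yᶜ wᶜ)

theorem bot_sup (x : A) : ⊥ ⊔ x = x := by
  simpa only [inf_top, sup_bot] using (inf_sup x ⊤ ⊥).symm

theorem top_inf (x : A) : ⊤ ⊓ x = x := by
  simpa only [inf_top, sup_bot] using (sup_inf x ⊥ ⊤).symm

theorem top_sup_top : (⊤ : A) ⊔ ⊤ = ⊤ := by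
  simpa only [top_inf, bot_sup, inf_top] using (inf_sup ⊤ ⊥ (⊤ : A)).symm

theorem bot_inf_bot : (⊥ : A) ⊓ ⊥ = ⊥ := by
  simpa only [compl_sup, compl_top] using congrArg compl (top_sup_top (A := A))

theorem sup_top (x : A) : x ⊔ ⊤ = ⊤ ⊔ x := by
  simpa only [inf_top, top_sup_top] using inf_sup x ⊤ ⊤

theorem inf_bot (x : A) : x ⊓ ⊥ = ⊥ ⊓ x := by
  simpa only [sup_bot, bot_inf_bot] using sup_inf x ⊥ ⊥

theorem inf_self (x : A) : x ⊓ x = x := by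
  simpa only [bot_inf_bot, sup_bot, bot_sup] using (inf_sup ⊥ ⊥ x).symm

theorem sup_self (x : A) : x ⊔ x = x := by
  simpa only [top_sup_top, inf_top, top_inf] using (sup_inf ⊤ ⊤ x).symm

theorem inf_eq_inf_sup_bot_inf (x y : A) : x ⊓ y = (y ⊓ x) ⊔ (⊥ ⊓ y) := by
  simpa only [sup_bot] using sup_inf x ⊥ y

/-- The absorption term `(y ∧ x) ∨ y`, which equals `y` precisely when `x` and `y` satisfy the
absorption law. -/
def absorb (x y : A) : A :=
  (y ⊓ x) ⊔ y

theorem absorb_self (x : A) : absorb x x = x := by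
  rw [absorb, inf_self, sup_self]

theorem absorb_eq_inf_sup (x y : A) : absorb x y = y ⊓ (x ⊔ y) := by
  rw [absorb, inf_sup, sup_self]

theorem absorb_eq_bot_inf_sup (x y : A) : absorb x y = (⊥ ⊓ x) ⊔ y := by
  rw [absorb_eq_inf_sup, inf_sup, sup_bot]

theorem absorb_eq_sup_inf (x y : A) : absorb x y = (y ⊔ x) ⊓ y := by
  rw [absorb_eq_bot_inf_sup, ← inf_bot, inf_sup, bot_sup]

theorem compl_absorb (x y : A) : (absorb x y)ᶜ = absorb xᶜ yᶜ := by
  rw [absorb, compl_sup, compl_inf, ← absorb_eq_sup_inf]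

theorem bot_inf_top_sup (x : A) : ⊥ ⊓ (⊤ ⊔ x) = ⊥ ⊓ x := by
  rw [← sup_top, ← inf_bot, sup_inf, top_inf, ← absorb, absorb_eq_bot_inf_sup, sup_bot]

theorem top_sup_bot_inf (x : A) : ⊤ ⊔ (⊥ ⊓ x) = ⊤ ⊔ x := by
  simpa only [compl_sup, compl_inf, compl_compl, compl_top, compl_bot] using
    congrArg compl (bot_inf_top_sup xᶜ)

theorem bot_inf_bot_inf (x : A) : ⊥ ⊓ (⊥ ⊓ x) = ⊥ ⊓ x :=
  calc ⊥ ⊓ (⊥ ⊓ x) = ⊥ ⊓ (⊤ ⊔ (⊥ ⊓ x)) := (bot_inf_top_sup _).symm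
    _ = ⊥ ⊓ (⊤ ⊔ x) := by rw [top_sup_bot_inf]
    _ = ⊥ ⊓ x := bot_inf_top_sup x

theorem bot_inf_sup (x y : A) : ⊥ ⊓ (x ⊔ y) = (⊥ ⊓ x) ⊔ (⊥ ⊓ y) := by
  rw [← inf_bot, sup_inf, inf_bot y]

theorem inf_eq_sup_of_bot_inf_eq {x y : A} (hx : ⊥ ⊓ x = x) (hy : ⊥ ⊓ y = y) :
    x ⊓ y = x ⊔ y :=
  calc x ⊓ y = absorb x y := by rw [inf_eq_inf_sup_bot_inf, hy, absorb]
    _ = x ⊔ y := by rw [absorb_eq_bot_inf_sup, hx]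

variable (A) in
/-- The image of the retraction `x ↦ 0 ∧ x`, as the set of its fixed points. Join and meet coincide
on it; they are written as multiplication, with unit `0`. -/
@[ext]
structure Skeleton where
  val : A
  bot_inf_val : ⊥ ⊓ val = val

namespace Skeleton

instance : MulOneClass (Skeleton A) where
  mul s t := ⟨s.val ⊔ t.val, by rw [bot_inf_sup, s.bot_inf_val, t.bot_inf_val]⟩
  one := ⟨⊥, bot_inf_bot⟩
  one_mul s := Skeleton.ext (bot_sup s.val)
  mul_one s := Skeleton.ext (sup_bot s.val)

theorem val_mul (s t : Skeleton A) : (s * t).val = s.val ⊔ t.val := rfl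

theorem val_mul_eq_inf (s t : Skeleton A) : (s * t).val = s.val ⊓ t.val :=
  (inf_eq_sup_of_bot_inf_eq s.bot_inf_val t.bot_inf_val).symm

theorem mul_mul_eq (s t u : Skeleton A) : s * t * u = u * s * (t * u) :=
  Skeleton.ext <|
    calc (s * t * u).val = (s.val ⊓ t.val) ⊔ u.val := by rw [val_mul, val_mul_eq_inf]
      _ = (u.val ⊔ s.val) ⊓ (t.val ⊔ u.val) := inf_sup _ _ _
      _ = (u * s * (t * u)).val := by rw [val_mul_eq_inf, val_mul, val_mul]

instance : Monoid (Skeleton A) where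
  mul_assoc := mul_assoc_of_twisted mul_mul_eq

end Skeleton

/-- The retraction `x ↦ 0 ∧ x` onto the skeleton. -/
def toSkeleton (x : A) : Skeleton A :=
  ⟨⊥ ⊓ x, bot_inf_bot_inf x⟩

theorem val_toSkeleton (x : A) : (toSkeleton x).val = ⊥ ⊓ x := rfl

theorem toSkeleton_sup (x y : A) : toSkeleton (x ⊔ y) = toSkeleton x * toSkeleton y :=
  Skeleton.ext (bot_inf_sup x y)

theorem toSkeleton_absorb (x y : A) :
    toSkeleton (absorb x y) = toSkeleton x * toSkeleton y := by
  have hretract : toSkeleton (⊥ ⊓ x) = toSkeleton x := Skeleton.ext (bot_inf_bot_inf x)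
  rw [absorb_eq_bot_inf_sup, toSkeleton_sup, hretract]

theorem absorb_eq_of_toSkeleton_eq {x y : A} (h : toSkeleton x = toSkeleton y) (w : A) :
    absorb x w = absorb y w := by
  rw [absorb_eq_bot_inf_sup, absorb_eq_bot_inf_sup, ← val_toSkeleton, h, val_toSkeleton]

theorem absorb_absorb_right (x y : A) : absorb (absorb x y) y = absorb x y :=
  calc absorb (absorb x y) y = (toSkeleton x * toSkeleton y).val ⊔ y := by
        rw [absorb_eq_bot_inf_sup, ← val_toSkeleton, toSkeleton_absorb]
    _ = ((⊥ ⊓ x) ⊓ (⊥ ⊓ y)) ⊔ y := by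
        rw [Skeleton.val_mul_eq_inf, val_toSkeleton, val_toSkeleton]
    _ = (y ⊔ (⊥ ⊓ x)) ⊓ y := by rw [inf_sup, ← absorb_eq_bot_inf_sup y y, absorb_self]
    _ = absorb (⊥ ⊓ x) y := (absorb_eq_sup_inf _ _).symm
    _ = absorb x y := absorb_eq_of_toSkeleton_eq (Skeleton.ext (bot_inf_bot_inf x)) y

theorem absorb_eq_right_iff {x y : A} :
    absorb x y = y ↔ toSkeleton x * toSkeleton y = toSkeleton y := by
  rw [← toSkeleton_absorb]
  refine ⟨congrArg toSkeleton, fun h => ?_⟩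
  rw [← absorb_absorb_right, absorb_eq_of_toSkeleton_eq h, absorb_self]

/-- The relation `R₁`, which records a failure of absorption: it holds identically when `∨` and `∧`
are lattice operations. -/
def R₁ (x y : A) : Prop :=
  (x ⇨ yᶜ) ⇨ x = x ∧ (y ⇨ xᶜ) ⇨ y = y

theorem himp_compl_himp_self (x y : A) : (x ⇨ yᶜ) ⇨ x = absorb y x := by
  rw [himp_eq_compl_sup, himp_eq_compl_sup, compl_sup, compl_compl, compl_compl, absorb]

theorem r₁_iff_absorb {x y : A} : R₁ x y ↔ absorb y x = x ∧ absorb x y = y := by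
  rw [R₁, himp_compl_himp_self, himp_compl_himp_self]

theorem r₁_iff_greenR {x y : A} : R₁ x y ↔ GreenR (toSkeleton x) (toSkeleton y) := by
  rw [r₁_iff_absorb, absorb_eq_right_iff, absorb_eq_right_iff, GreenR]

theorem r₁_equivalence : Equivalence (R₁ (A := A)) := by
  have hR₁ : R₁ (A := A) = Function.onFun GreenR toSkeleton :=
    funext₂ fun _ _ => propext r₁_iff_greenR
  rw [hR₁]
  exact (greenR_equivalence (mul_self_of_twisted Skeleton.mul_mul_eq)).comap toSkeleton

theorem R₁.compl {x y : A} (h : R₁ x y) : R₁ xᶜ yᶜ := by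
  rw [r₁_iff_absorb] at h ⊢
  rw [← compl_absorb, ← compl_absorb, h.1, h.2]
  exact ⟨rfl, rfl⟩

theorem R₁.sup {a b c d : A} (hab : R₁ a b) (hcd : R₁ c d) : R₁ (a ⊔ c) (b ⊔ d) := by
  rw [r₁_iff_greenR] at hab hcd ⊢
  rw [toSkeleton_sup, toSkeleton_sup]
  exact hab.mul (mul_mul_self_left_of_twisted Skeleton.mul_mul_eq) hcd

theorem R₁.himp {a b c d : A} (hab : R₁ a b) (hcd : R₁ c d) : R₁ (a ⇨ c) (b ⇨ d) := by
  rw [himp_eq_compl_sup, himp_eq_compl_sup]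
  exact hab.compl.sup hcd

end InvolutiveZroupoid

theorem stmt14 (A : Type*) (imp : A → A → A) (z : A)
    (hI : ∀ x y w : A, imp (imp x y) w = imp (imp (imp (imp w z) x) (imp (imp y w) z)) z)
    (hI0 : imp (imp z z) z = z)
    (hInv : ∀ x : A, imp (imp x z) z = x) :
    Equivalence (fun x y : A => imp (imp x (imp y z)) x = x ∧ imp (imp y (imp x z)) y = y) ∧
    (∀ a b c d : A,
      (imp (imp a (imp b z)) a = a ∧ imp (imp b (imp a z)) b = b) →
      (imp (imp c (imp d z)) c = c ∧ imp (imp d (imp c z)) d = d) →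
      (imp (imp (imp a c) (imp (imp b d) z)) (imp a c) = imp a c ∧
       imp (imp (imp b d) (imp (imp a c) z)) (imp b d) = imp b d)) := by
  let _ : InvolutiveZroupoid A :=
    { himp := imp, bot := z, himp_himp := hI, himp_bot_himp_bot := hInv }
  exact ⟨InvolutiveZroupoid.r₁_equivalence, fun _ _ _ _ => InvolutiveZroupoid.R₁.himp⟩
end

section
/- Every simple implication zroupoid satisfying x'' = x and having at least 3 elements satisfies the De Morgan identity (x → y) → x = x. -/
/-!
Call two elements equivalent when they have the same image under `x ↦ 0 → x`, a map that is constant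
on De Morgan algebras. The axiom (I) at `w = 0'` shows that this is a congruence, and it makes
`0 → x` equivalent to `x` and `0'` equivalent to `0`. Since `(0 → x) → y = (y → (x → y)')'`, it
follows that `x → y` is equivalent to `0` only if both `x` and `y` are. Hence the partition of the
algebra into the class of `0` and its complement is itself a congruence. In a simple algebra with
three elements this forces every `x` to be equivalent to `0`, that is `0 → x = 0'`, and then
`(x → y) → x = (0 → y) → x = 0' → x = x`.
-/

/-- An implication zroupoid satisfying `x'' = x`. The implication `x → y` is written `x ⇨ y` and the
derived operation `x' = x → 0` is written `xᶜ`. The axiom `0'' = 0` is a case of `compl_compl`. -/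
class InvolutiveZroupoid_s19 (A : Type*) extends Zero A, HImp A, Compl A where
  himp_zero (x : A) : x ⇨ 0 = xᶜ
  himp_himp (x y w : A) : (x ⇨ y) ⇨ w = ((wᶜ ⇨ x) ⇨ (y ⇨ w)ᶜ)ᶜ
  compl_compl (x : A) : xᶜᶜ = x

namespace InvolutiveZroupoid_s19

variable {A : Type*} [InvolutiveZroupoid_s19 A]

theorem compl_zero_himp (x : A) : 0ᶜ ⇨ x = x := by
  have h := himp_himp x 0 (0 : A)
  simp only [himp_zero, compl_compl] at h
  exact h.symm

theorem zero_himp_himp (x y : A) : (0 ⇨ x) ⇨ y = (y ⇨ (x ⇨ y)ᶜ)ᶜ := by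
  rw [himp_himp, himp_zero, compl_compl]

theorem zero_himp_himp_compl_zero (x : A) : (0 ⇨ x) ⇨ 0ᶜ = x ⇨ 0ᶜ := by
  rw [zero_himp_himp, compl_zero_himp, compl_compl]

theorem zero_himp_compl_zero : (0 : A) ⇨ 0ᶜ = 0ᶜ := by
  rw [← zero_himp_himp_compl_zero, himp_zero, compl_zero_himp]

theorem himp_compl_self (x : A) : x ⇨ xᶜ = xᶜ := by
  have h := zero_himp_himp 0ᶜ x
  rw [zero_himp_compl_zero, compl_zero_himp] at h
  rw [← compl_compl (x ⇨ xᶜ), ← h]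

theorem compl_himp_self (x : A) : xᶜ ⇨ x = x := by
  simpa only [compl_compl] using himp_compl_self xᶜ

theorem himp_himp_self (x y : A) : (x ⇨ y) ⇨ x = (0 ⇨ y) ⇨ x := by
  rw [himp_himp, compl_himp_self, zero_himp_himp]

theorem himp_compl_zero (x : A) : x ⇨ 0ᶜ = 0 ⇨ xᶜ := by
  have h := himp_himp xᶜ 0 (0ᶜ : A)
  rwa [zero_himp_compl_zero, himp_zero, compl_compl, compl_compl, himp_zero, compl_compl] at h

/-- The kernel `x ≈ y` of the map `x ↦ 0 → x`. An involutive zroupoid is a De Morgan algebra exactly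
when this is the full relation. -/
instance : Setoid A := Setoid.ker fun x => 0 ⇨ x

theorem equiv_iff {x y : A} : x ≈ y ↔ 0 ⇨ x = 0 ⇨ y := Iff.rfl

theorem compl_zero_himp_equiv (x : A) : (0 ⇨ x)ᶜ ≈ xᶜ := by
  rw [equiv_iff, ← himp_compl_zero, ← himp_compl_zero, zero_himp_himp_compl_zero]

theorem compl_equiv_compl {x y : A} (h : x ≈ y) : xᶜ ≈ yᶜ :=
  calc
    xᶜ ≈ (0 ⇨ x)ᶜ := Setoid.symm (compl_zero_himp_equiv x)
    _ = (0 ⇨ y)ᶜ := congrArg _ h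
    _ ≈ yᶜ := compl_zero_himp_equiv y

theorem compl_equiv_compl_iff {x y : A} : xᶜ ≈ yᶜ ↔ x ≈ y :=
  ⟨fun h => by simpa only [compl_compl] using compl_equiv_compl h, compl_equiv_compl⟩

theorem zero_himp_equiv (x : A) : 0 ⇨ x ≈ x :=
  compl_equiv_compl_iff.1 (compl_zero_himp_equiv x)

theorem compl_zero_equiv_zero : (0 : A)ᶜ ≈ 0 := by
  rw [equiv_iff, zero_himp_compl_zero, himp_zero]

theorem compl_equiv_zero_iff {x : A} : xᶜ ≈ 0 ↔ x ≈ 0 :=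
  ⟨fun h => compl_equiv_compl_iff.1 (Setoid.trans h (Setoid.symm compl_zero_equiv_zero)),
    fun h => Setoid.trans (compl_equiv_compl h) compl_zero_equiv_zero⟩

theorem zero_himp_compl_himp (x y : A) : 0 ⇨ (x ⇨ y)ᶜ = ((0 ⇨ x) ⇨ (0 ⇨ yᶜ)ᶜ)ᶜ := by
  rw [← himp_compl_zero, himp_himp, compl_compl, himp_compl_zero]

theorem himp_equiv_himp {a b c d : A} (hab : a ≈ b) (hcd : c ≈ d) : a ⇨ c ≈ b ⇨ d := by
  refine compl_equiv_compl_iff.1 ?_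
  rw [equiv_iff, zero_himp_compl_himp, zero_himp_compl_himp, equiv_iff.1 hab,
    equiv_iff.1 (compl_equiv_compl hcd)]

theorem right_equiv_zero_of_himp {x y : A} (h : x ⇨ y ≈ 0) : y ≈ 0 := by
  have hcompl : (x ⇨ y)ᶜ ≈ 0 := compl_equiv_zero_iff.2 h
  calc
    y = (y ⇨ 0)ᶜ := by rw [himp_zero, compl_compl]
    _ ≈ (y ⇨ (x ⇨ y)ᶜ)ᶜ :=
      compl_equiv_compl (himp_equiv_himp (Setoid.refl y) (Setoid.symm hcompl))
    _ = (0 ⇨ x) ⇨ y := (zero_himp_himp x y).symm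
    _ ≈ x ⇨ y := himp_equiv_himp (zero_himp_equiv x) (Setoid.refl y)
    _ ≈ 0 := h

theorem himp_equiv_zero_iff {x y : A} : x ⇨ y ≈ 0 ↔ x ≈ 0 ∧ y ≈ 0 := by
  constructor
  · intro h
    have hy : y ≈ 0 := right_equiv_zero_of_himp h
    have hx : xᶜ ≈ 0 := calc
      xᶜ = x ⇨ 0 := (himp_zero x).symm
      _ ≈ x ⇨ y := himp_equiv_himp (Setoid.refl x) (Setoid.symm hy)
      _ ≈ 0 := h
    exact ⟨compl_equiv_zero_iff.1 hx, hy⟩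
  · rintro ⟨hx, hy⟩
    exact Setoid.trans (himp_equiv_himp hx hy) (zero_himp_equiv 0)

theorem himp_himp_self_of_equiv_zero {x y : A} (h : y ≈ 0) : (x ⇨ y) ⇨ x = x := by
  rw [himp_himp_self, equiv_iff.1 h, himp_zero, compl_zero_himp]

end InvolutiveZroupoid_s19

theorem stmt19 (A : Type*) (imp : A → A → A) (z : A)
    (hI : ∀ x y w : A, imp (imp x y) w = imp (imp (imp (imp w z) x) (imp (imp y w) z)) z)
    (hI0 : imp (imp z z) z = z)
    (hInv : ∀ x : A, imp (imp x z) z = x)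
    (hsimple : ∀ r : A → A → Prop, Equivalence r →
      (∀ a b c d : A, r a b → r c d → r (imp a c) (imp b d)) →
      (∀ a b : A, r a b ↔ a = b) ∨ (∀ a b : A, r a b))
    (hcard : ∃ a b c : A, a ≠ b ∧ a ≠ c ∧ b ≠ c) :
    ∀ x y : A, imp (imp x y) x = x := by
  let _ : InvolutiveZroupoid_s19 A :=
    { zero := z, himp := imp, compl := fun x => imp x z
      himp_zero := fun _ => rfl, himp_himp := hI, compl_compl := hInv }
  rcases hsimple (fun x y => x ≈ 0 ↔ y ≈ 0)
      ⟨fun _ => Iff.rfl, Iff.symm, Iff.trans⟩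
      (fun _ _ _ _ hab hcd =>
        InvolutiveZroupoid_s19.himp_equiv_zero_iff.trans
          ((and_congr hab hcd).trans InvolutiveZroupoid_s19.himp_equiv_zero_iff.symm))
    with hdiag | hfull
  · obtain ⟨a, b, c, hab, hac, hbc⟩ := hcard
    have hab' : ¬(a ≈ 0 ↔ b ≈ 0) := fun h => hab ((hdiag a b).1 h)
    have hac' : ¬(a ≈ 0 ↔ c ≈ 0) := fun h => hac ((hdiag a c).1 h)
    have hbc' : ¬(b ≈ 0 ↔ c ≈ 0) := fun h => hbc ((hdiag b c).1 h)
    tauto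
  · intro x y
    exact InvolutiveZroupoid_s19.himp_himp_self_of_equiv_zero ((hfull y 0).2 (Setoid.refl 0))
end
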